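/- For an index set I, the wedge of circles realization |Γ| of the Top-graph Γ with a single vertex and discrete edge space I has fundamental group isomorphic (as a group) to the free group on I. -/

import Mathlib

universe u

/-- A point of `(I × [0,1]) ⊕ {v}` is a "vertex point" if it is the added vertex or an
endpoint of an edge. -/
def IsVertexPoint {I : Type u} : (I × unitInterval) ⊕ PUnit.{u+1} → Prop
  | Sum.inl p => p.2 = 0 ∨ p.2 = 1
  | Sum.inr _ => True

/-- The setoid realizing the wedge of circles indexed by `I`: all endpoints of the
intervals `{i} × [0,1]` and the extra vertex are identified to a single point. -/
def wedgeCirclesSetoid (I : Type u) : Setoid ((I × unitInterval) ⊕ PUnit.{u+1}) where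
  r a b := a = b ∨ (IsVertexPoint a ∧ IsVertexPoint b)
  iseqv := by
    constructor
    · exact fun a => Or.inl rfl
    · rintro a b (rfl | h)
      · exact Or.inl rfl
      · exact Or.inr ⟨h.2, h.1⟩
    · rintro a b c (rfl | h) (rfl | h')
      · exact Or.inl rfl
      · exact Or.inr h'
      · exact Or.inr h
      · exact Or.inr ⟨h.1, h'.2⟩

/-- The geometric realization of the `Top`-graph with one vertex and discrete edge
space `I`: the wedge of circles indexed by `I`, with the quotient topology. -/
def WedgeCircles (I : Type u) : Type u := Quotient (wedgeCirclesSetoid I)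

instance (I : Type u) [TopologicalSpace I] [DiscreteTopology I] :
    TopologicalSpace (WedgeCircles I) :=
  instTopologicalSpaceQuotient

/-- The basepoint (the unique vertex) of the wedge of circles. -/
def wedgeCirclesBase (I : Type u) : WedgeCircles I :=
  Quotient.mk (wedgeCirclesSetoid I) (Sum.inr PUnit.unit)

/-!
The loops around the circles define a homomorphism from the free group to the fundamental group.

It is injective because the wedge has a covering space with arbitrarily prescribed permutations of
the fibre as holonomies around the circles: let the fibre be the free group and let the `i`-th
holonomy be left multiplication by the `i`-th generator.

It is surjective because every point has a neighbourhood which is pushed into the vertex by a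
homotopy moving points along their edges. The traces of these homotopies turn a loop, cut into short
pieces, into a product of loops each of which runs inside a single edge.
-/

open Filter Set Topology

/-- An open cover of `X` with a permutation of `S` at each point of each chart, whose transition
functions `(gauge j)⁻¹ * gauge i` are locally constant on overlaps. The gauges themselves may jump:
they describe a covering space of `X` with fibre `S` as glued from the trivial ones, in such a way
that its holonomy can be read off in `S`. -/
structure FlatAtlas (ι X S : Type*) [TopologicalSpace X] where
  chart : ι → Set X
  isOpen_chart : ∀ i, IsOpen (chart i)
  exists_mem_chart : ∀ x, ∃ i, x ∈ chart i
  gauge : ι → X → Equiv.Perm S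
  transition_eventually_const : ∀ i j, ∀ x ∈ chart i ∩ chart j,
    ∀ᶠ y in 𝓝 x, (gauge j y)⁻¹ * gauge i y = (gauge j x)⁻¹ * gauge i x

namespace FlatAtlas

variable {ι X S : Type*} [TopologicalSpace X] (A : FlatAtlas ι X S)

/-- A section of the covering space along `γ`, in the coordinates where the fibre over every point
of `X` is identified with `S`: on each chart its gauge transform is locally constant. -/
def IsParallel {Z : Type*} [TopologicalSpace Z] (γ : Z → X) (u : Z → S) : Prop :=
  ∀ i z, γ z ∈ A.chart i → ∀ᶠ z' in 𝓝 z, (A.gauge i (γ z'))⁻¹ (u z') = (A.gauge i (γ z))⁻¹ (u z)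

variable [TopologicalSpace S] [DiscreteTopology S]

/-- The fibre bundle glued from the charts by the transition functions. -/
noncomputable def core : FiberBundleCore ι X S where
  baseSet := A.chart
  isOpen_baseSet := A.isOpen_chart
  indexAt x := (A.exists_mem_chart x).choose
  mem_baseSet_at x := (A.exists_mem_chart x).choose_spec
  coordChange i j x s := (A.gauge j x)⁻¹ (A.gauge i x s)
  coordChange_self := by simp
  continuousOn_coordChange i j := by
    rw [continuousOn_prod_of_discrete_right]
    refine fun s x hx ↦ ContinuousAt.continuousWithinAt ?_
    refine (continuousAt_const (y := (A.gauge j x)⁻¹ (A.gauge i x s))).congr ?_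
    filter_upwards [A.transition_eventually_const i j x hx.1] with y hy
    exact (congrArg (· s) hy).symm
  coordChange_comp := by simp

theorem isCoveringMap_proj : IsCoveringMap A.core.proj :=
  FiberBundle.isCoveringMap (F := S) (E := A.core.Fiber)

/-- The point of the covering space over `x` which has coordinate `s` with respect to the
identification of the fibres with `S` used in `IsParallel`. -/
noncomputable def point (x : X) (s : S) : A.core.TotalSpace :=
  ⟨x, (A.gauge (A.core.indexAt x) x)⁻¹ s⟩

/-- The bijection `A.point x` onto the fibre over `x`. -/
noncomputable def fiberEquiv (x : X) : S ≃ A.core.proj ⁻¹' {x} :=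
  .ofBijective (fun s ↦ ⟨A.point x s, rfl⟩) <| by
    constructor
    · intro s t hst
      have h := eq_of_heq (Bundle.TotalSpace.mk.inj (congrArg Subtype.val hst)).2
      exact (A.gauge (A.core.indexAt x) x)⁻¹.injective h
    · rintro ⟨⟨y, v⟩, rfl : y = x⟩
      exact ⟨A.gauge (A.core.indexAt y) y v, Subtype.ext <|
        congrArg (Bundle.TotalSpace.mk y) (Equiv.symm_apply_apply _ _)⟩

variable {A}

theorem IsParallel.continuous_point {Z : Type*} [TopologicalSpace Z] {γ : Z → X} {u : Z → S}
    (hu : A.IsParallel γ u) (hγ : Continuous γ) : Continuous fun z ↦ A.point (γ z) (u z) := by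
  refine continuous_iff_continuousAt.2 fun z ↦ ?_
  rw [FiberBundle.continuousAt_totalSpace]
  refine ⟨hγ.continuousAt, ?_⟩
  set i := A.core.indexAt (γ z)
  have trivialization_apply (z' : Z) :
      (trivializationAt S A.core.Fiber (A.point (γ z) (u z)).proj (A.point (γ z') (u z'))).2 =
        (A.gauge i (γ z'))⁻¹ (u z') :=
    congrArg (⇑(A.gauge i (γ z'))⁻¹) (Equiv.apply_symm_apply _ _)
  simp only [trivialization_apply]
  exact continuousAt_const.congr <|
    (hu i z (A.core.mem_baseSet_at (γ z))).mono fun _ h ↦ h.symm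

variable (A)

/-- The monodromy representation of the covering space, transported to `S`. -/
noncomputable def holonomy (x₀ : X) : FundamentalGroup X x₀ →* Equiv.Perm S :=
  (A.fiberEquiv x₀).symm.permCongrHom.toMonoidHom.comp (A.isCoveringMap_proj.monodromyPerm x₀)

variable {A}

theorem IsParallel.holonomy_apply {x₀ : X} {γ : Path x₀ x₀} {u : unitInterval → S}
    (hu : A.IsParallel γ u) :
    A.holonomy x₀ (.fromPath (.mk γ)) (u 0) = u 1 := by
  let lift : Path (A.point x₀ (u 0)) (A.point x₀ (u 1)) :=
    { toFun := fun t ↦ A.point (γ t) (u t)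
      continuous_toFun := hu.continuous_point γ.continuous
      source' := by rw [γ.source]
      target' := by rw [γ.target] }
  have monodromy_eq : A.isCoveringMap_proj.monodromy (.mk γ) (A.fiberEquiv x₀ (u 0)) =
      A.fiberEquiv x₀ (u 1) :=
    A.isCoveringMap_proj.monodromy_eq_of_map_eq (.mk lift) rfl
  exact (A.fiberEquiv x₀).symm_apply_eq.2 monodromy_eq

end FlatAtlas

section LocalContractions

open CategoryTheory FundamentalGroupoid

/-- The arrows which become elements of `H` when their endpoints are joined to `c₀` along the
given arrows `tree c`. -/
def treeSubgroupoid {C : Type*} [Groupoid C] {c₀ : C} (H : Subgroup (End c₀))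
    (tree : ∀ c, c₀ ⟶ c) : Subgroupoid C where
  arrows c d := {p | End.of (tree c ≫ p ≫ Groupoid.inv (tree d)) ∈ H}
  inv {c d p} hp := by
    have h : End.of (tree d ≫ Groupoid.inv p ≫ Groupoid.inv (tree c)) =
        (End.of (tree c ≫ p ≫ Groupoid.inv (tree d)))⁻¹ :=
      eq_inv_of_mul_eq_one_left (by simp)
    change End.of _ ∈ H
    exact h ▸ H.inv_mem hp
  mul {c d e p} hp q hq := by
    have h : End.of (tree c ≫ (p ≫ q) ≫ Groupoid.inv (tree e)) =
        End.of (tree d ≫ q ≫ Groupoid.inv (tree e)) *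
          End.of (tree c ≫ p ≫ Groupoid.inv (tree d)) := by
      simp
    change End.of _ ∈ H
    exact h ▸ H.mul_mem hq hp

theorem eq_top_of_treeSubgroupoid_eq_top {C : Type*} [Groupoid C] {c₀ : C}
    {H : Subgroup (End c₀)} {tree : ∀ c, c₀ ⟶ c} (h : treeSubgroupoid H tree = ⊤) : H = ⊤ := by
  refine (Subgroup.eq_top_iff' H).2 fun p ↦ ?_
  have hp : Groupoid.inv (tree c₀) ≫ p ≫ tree c₀ ∈ (treeSubgroupoid H tree).arrows c₀ c₀ :=
    h ▸ mem_univ _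
  simpa [treeSubgroupoid] using hp

theorem mem_treeSubgroupoid_of_comp_mem {C : Type*} [Groupoid C] {c₀ c d : C}
    {H : Subgroup (End c₀)} {tree : ∀ c, c₀ ⟶ c} (p : c ⟶ d) (q : d ⟶ c₀)
    (hp : End.of (tree c ≫ p ≫ q) ∈ H) (hq : End.of (tree d ≫ q) ∈ H) :
    p ∈ (treeSubgroupoid H tree).arrows c d := by
  have h : (End.of (tree d ≫ q))⁻¹ * End.of (tree c ≫ p ≫ q) =
      End.of (tree c ≫ p ≫ Groupoid.inv (tree d)) :=
    inv_mul_eq_of_eq_mul (by simp)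
  change End.of _ ∈ H
  exact h ▸ H.mul_mem (H.inv_mem hq) hp

variable {X : Type*} [TopologicalSpace X]

theorem subgroupoid_eq_top_of_locally {S : Subgroupoid (FundamentalGroupoid X)}
    (h : ∀ x, ∃ U ∈ 𝓝 x, ∀ ⦃y z⦄ (γ : Path y z), range γ ⊆ U →
      fromPath (.mk γ) ∈ S.arrows ⟨y⟩ ⟨z⟩) :
    S = ⊤ := by
  refine top_unique <| (Subgroupoid.le_iff _ _).2 fun {x y} q _ ↦ ?_
  obtain ⟨γ, rfl⟩ := Path.Homotopic.Quotient.mk_surjective q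
  let P (s t : unitInterval) : Prop := fromPath (.mk (γ.subpath s t)) ∈ S.arrows ⟨γ s⟩ ⟨γ t⟩
  have symm_P : Std.Symm P := ⟨fun s t hst ↦ by
    simp only [P, ← γ.symm_subpath s t]
    exact S.inv hst⟩
  have trans_P : IsTrans unitInterval P := ⟨fun r s t hrs hst ↦
    mem_of_eq_of_mem (Path.Homotopic.Quotient.eq.2 ⟨.symm (.subpathTransSubpath γ r s t)⟩)
      (S.mul hrs hst)⟩
  have local_P (s : unitInterval) : ∀ᶠ t in 𝓝 s, P s t := by
    obtain ⟨U, hU, hSU⟩ := h (γ s)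
    have tendsto_uIcc : Tendsto (fun t ↦ uIcc s t) (𝓝 s) (𝓝 s).smallSets :=
      tendsto_const_nhds.uIcc tendsto_id
    filter_upwards [tendsto_smallSets_iff.1 tendsto_uIcc _ (γ.continuous.continuousAt hU)] with t ht
    exact hSU _ (γ.range_subpath s t ▸ image_subset_iff.2 ht)
  have mem_of_cast : ∀ {a b} (ha : a = x.as) (hb : b = y.as),
      fromPath (.mk (γ.cast ha hb)) ∈ S.arrows ⟨a⟩ ⟨b⟩ → fromPath (.mk γ) ∈ S.arrows x y := by
    rintro _ _ rfl rfl h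
    exact h
  exact mem_of_cast γ.source γ.target <|
    γ.subpath_zero_one ▸ PreconnectedSpace.induction₂ P local_P trans_P 0 1

/-- The path from `x` to `x₀` traced by `x` under a homotopy from the identity to a map sending
`x` to `x₀`. -/
def contractionTrace {r : C(X, X)} (F : (ContinuousMap.id X).Homotopy r) {x x₀ : X}
    (hx : r x = x₀) : Path.Homotopic.Quotient x x₀ :=
  (Path.Homotopic.Quotient.mk (F.evalAt x)).cast rfl hx.symm

theorem mk_trans_contractionTrace {r : C(X, X)} (F : (ContinuousMap.id X).Homotopy r)
    {x y x₀ : X} (γ : Path x y) (hγ : ∀ t, r (γ t) = x₀) (hx : r x = x₀) (hy : r y = x₀) :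
    (Path.Homotopic.Quotient.mk γ).trans (contractionTrace F hy) = contractionTrace F hx := by
  have cancel : ∀ {a b} (ha : a = x₀) (hb : b = x₀) (p : Path.Homotopic.Quotient x y)
      (σ : Path.Homotopic.Quotient x a) (τ : Path.Homotopic.Quotient y b),
      p.trans τ = σ.trans (.mk ((Path.refl x₀).cast ha hb)) →
        p.trans (τ.cast rfl hb.symm) = σ.cast rfl ha.symm := by
    rintro _ _ rfl rfl p σ τ h
    simpa using h
  have map_eq_refl : γ.map r.continuous = (Path.refl x₀).cast hx hy := Path.ext (funext hγ)
  exact cancel hx hy _ _ _ <|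
    map_eq_refl ▸ Path.Homotopic.Quotient.eq.2 (Path.Homotopic.map_trans_evalAt F γ)

theorem subgroup_eq_top_of_local_contractions {x₀ : X} {H : Subgroup (FundamentalGroup X x₀)}
    (tree : ∀ x, Path.Homotopic.Quotient x₀ x)
    (h : ∀ x, ∃ (r : C(X, X)) (F : (ContinuousMap.id X).Homotopy r), ∀ᶠ y in 𝓝 x,
      ∃ hy : r y = x₀, .fromPath ((tree y).trans (contractionTrace F hy)) ∈ H) :
    H = ⊤ := by
  refine eq_top_of_treeSubgroupoid_eq_top (tree := fun x ↦ fromPath (tree x.as)) <|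
    subgroupoid_eq_top_of_locally fun x ↦ ?_
  obtain ⟨r, F, hrF⟩ := h x
  refine ⟨_, hrF, fun y z γ hγ ↦ ?_⟩
  obtain ⟨hy, hyH⟩ := hγ γ.source_mem_range
  obtain ⟨hz, hzH⟩ := hγ γ.target_mem_range
  rw [← mk_trans_contractionTrace F γ (fun t ↦ (hγ (mem_range_self t)).choose) hy hz] at hyH
  exact mem_treeSubgroupoid_of_comp_mem _ (fromPath (contractionTrace F hz)) hyH hzH

end LocalContractions

section Order

theorem eq_zero_or_eq_one_of_notMem_Ioo {t : unitInterval} (ht : t ∉ Ioo 0 1) :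
    t = 0 ∨ t = 1 := by
  by_contra! h
  exact ht ⟨unitInterval.pos_iff_ne_zero.2 h.1, unitInterval.lt_one_iff_ne_one.2 h.2⟩

theorem eventually_ite_le_eq {α β : Type*} [TopologicalSpace α] [LinearOrder α]
    [OrderClosedTopology α] {t m : α} (ht : t ≠ m) (x y : β) :
    ∀ᶠ t' in 𝓝 t, (if t' ≤ m then x else y) = if t ≤ m then x else y := by
  rcases ht.lt_or_gt with h | h
  · filter_upwards [eventually_lt_nhds h] with t' ht'
    rw [if_pos ht'.le, if_pos h.le]
  · filter_upwards [eventually_gt_nhds h] with t' ht'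
    rw [if_neg ht'.not_ge, if_neg h.not_ge]

theorem exists_continuous_eq_zero_eq_one_of_lt {α : Type*} [TopologicalSpace α] [LinearOrder α]
    [OrderClosedTopology α] [NormalSpace α] {a b : α} (hab : a < b) :
    ∃ f : C(α, unitInterval), (∀ t ≤ a, f t = 0) ∧ ∀ t, b ≤ t → f t = 1 := by
  obtain ⟨f, hf₀, hf₁, hf⟩ := exists_continuous_zero_one_of_isClosed isClosed_Iic isClosed_Ici
    (Iic_disjoint_Ici.2 hab.not_ge)
  exact ⟨⟨fun t ↦ ⟨f t, hf t⟩, by fun_prop⟩, fun t ht ↦ Subtype.ext (hf₀ ht),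
    fun t ht ↦ Subtype.ext (hf₁ ht)⟩

end Order

namespace WedgeCircles

section Cells

variable {I : Type u} {Y : Type*}

/-- The characteristic map of the `i`-th edge. -/
def edge (i : I) (t : unitInterval) : WedgeCircles I :=
  Quotient.mk (wedgeCirclesSetoid I) (Sum.inl (i, t))

theorem edge_zero (i : I) : edge i 0 = wedgeCirclesBase I :=
  Quotient.sound (.inr ⟨.inl rfl, trivial⟩)

theorem edge_one (i : I) : edge i 1 = wedgeCirclesBase I :=
  Quotient.sound (.inr ⟨.inr rfl, trivial⟩)

/-- The map out of the wedge which is `f i` on the `i`-th edge. -/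
def lift (y : Y) (f : I → unitInterval → Y) (h₀ : ∀ i, f i 0 = y) (h₁ : ∀ i, f i 1 = y) :
    WedgeCircles I → Y :=
  Quotient.lift (Sum.elim (fun p ↦ f p.1 p.2) fun _ ↦ y) <| by
    have map_vertex : ∀ z, IsVertexPoint z → Sum.elim (fun p ↦ f p.1 p.2) (fun _ ↦ y) z = y := by
      rintro (⟨i, t⟩ | _) (rfl | rfl)
      exacts [h₀ i, h₁ i, rfl]
    rintro a b (rfl | ⟨ha, hb⟩)
    · rfl
    · rw [map_vertex a ha, map_vertex b hb]

theorem edge_eq_base_iff {i : I} {t : unitInterval} :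
    edge i t = wedgeCirclesBase I ↔ t ∉ Ioo 0 1 := by
  constructor
  · rintro h ⟨h₀, h₁⟩
    rcases Quotient.exact h with h | ⟨rfl | rfl, -⟩
    exacts [Sum.inl_ne_inr h, h₀.false, h₁.false]
  · intro ht
    rcases eq_zero_or_eq_one_of_notMem_Ioo ht with rfl | rfl
    exacts [edge_zero i, edge_one i]

theorem eq_base_or_eq_edge (x : WedgeCircles I) :
    x = wedgeCirclesBase I ∨ ∃ i, ∃ t ∈ Ioo 0 1, x = edge i t := by
  obtain ⟨⟨i, t⟩ | ⟨⟩, rfl⟩ := Quotient.exists_rep x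
  · by_cases ht : t ∈ Ioo 0 1
    · exact .inr ⟨i, t, ht, rfl⟩
    · exact .inl (edge_eq_base_iff.2 ht)
  · exact .inl rfl

theorem edge_mem_image_edge_iff {i j : I} {t : unitInterval} {K : Set unitInterval}
    (hK : K ⊆ Ioo 0 1) : edge j t ∈ edge i '' K ↔ j = i ∧ t ∈ K := by
  constructor
  · rintro ⟨s, hs, h⟩
    rcases Quotient.exact h with h | ⟨rfl | rfl, -⟩
    · cases h
      exact ⟨rfl, hs⟩
    · exact (hK hs).1.false.elim
    · exact (hK hs).2.false.elim
  · rintro ⟨rfl, ht⟩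
    exact mem_image_of_mem _ ht

end Cells

section Topology

variable {I : Type u} [TopologicalSpace I] [DiscreteTopology I] {Y : Type*} [TopologicalSpace Y]

theorem isOpen_iff {U : Set (WedgeCircles I)} : IsOpen U ↔ ∀ i, IsOpen (edge i ⁻¹' U) := by
  have isQuotientMap_mk : IsQuotientMap (Y := WedgeCircles I) Quotient.mk'' :=
    isQuotientMap_quot_mk
  have isOpen_prod_iff_slices (s : Set (I × unitInterval)) :
      IsOpen s ↔ ∀ i, IsOpen (Prod.mk i ⁻¹' s) :=
    (continuous_Prop (p := (· ∈ s))).symm.trans <|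
      continuous_prod_of_discrete_left.trans <| forall_congr' fun _ ↦ continuous_Prop
  rw [← isQuotientMap_mk.isOpen_preimage, isOpen_sum_iff, and_iff_left (isOpen_discrete _)]
  exact isOpen_prod_iff_slices _

theorem isClosed_iff {C : Set (WedgeCircles I)} : IsClosed C ↔ ∀ i, IsClosed (edge i ⁻¹' C) := by
  simp only [← isOpen_compl_iff, isOpen_iff, preimage_compl]

theorem continuous_edge (i : I) : Continuous (edge i) :=
  ⟨fun _ hU ↦ isOpen_iff.1 hU i⟩

theorem continuous_lift {y : Y} {f : I → unitInterval → Y} {h₀ : ∀ i, f i 0 = y}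
    {h₁ : ∀ i, f i 1 = y} (hf : ∀ i, Continuous (f i)) : Continuous (lift y f h₀ h₁) :=
  ⟨fun _ hU ↦ isOpen_iff.2 fun i ↦ hU.preimage (hf i)⟩

theorem isOpen_image_edge (i : I) {V : Set unitInterval} (hV : IsOpen V) (hV' : V ⊆ Ioo 0 1) :
    IsOpen (edge i '' V) := by
  refine isOpen_iff.2 fun j ↦ ?_
  rcases eq_or_ne j i with rfl | hji
  · simpa [preimage, edge_mem_image_edge_iff hV'] using hV
  · simp [preimage, edge_mem_image_edge_iff hV', hji]

theorem isClosed_iUnion_image_edge {K : Set unitInterval} (hK : IsClosed K) (hK' : K ⊆ Ioo 0 1) :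
    IsClosed (⋃ i : I, edge i '' K) := by
  refine isClosed_iff.2 fun j ↦ ?_
  simpa [preimage, edge_mem_image_edge_iff hK'] using hK

theorem isClosed_singleton_base : IsClosed {wedgeCirclesBase I} := by
  refine isClosed_iff.2 fun i ↦ ?_
  have preimage_eq : edge i ⁻¹' {wedgeCirclesBase I} = (Ioo 0 1)ᶜ := ext fun _ ↦ edge_eq_base_iff
  exact preimage_eq ▸ isOpen_Ioo.isClosed_compl

theorem nhds_edge (i : I) {t : unitInterval} (ht : t ∈ Ioo 0 1) :
    𝓝 (edge i t) = map (edge i) (𝓝 t) := by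
  refine le_antisymm (fun V hV ↦ ?_) (continuous_edge i).continuousAt
  obtain ⟨W, hWV, hW, htW⟩ := mem_nhds_iff.1 (inter_mem hV (isOpen_Ioo.mem_nhds ht))
  refine mem_of_superset ((isOpen_image_edge i hW fun s hs ↦ (hWV hs).2).mem_nhds ⟨t, htW, rfl⟩) ?_
  exact image_subset_iff.2 fun s hs ↦ (hWV hs).1

/-- The loop that runs once around the `i`-th circle. -/
def loop (i : I) : Path (wedgeCirclesBase I) (wedgeCirclesBase I) where
  toFun := edge i
  continuous_toFun := continuous_edge i
  source' := edge_zero i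
  target' := edge_one i

/-- The class of `loop i`. -/
def loopClass (i : I) : FundamentalGroup (WedgeCircles I) (wedgeCirclesBase I) :=
  .fromPath (.mk (loop i))

end Topology

section Injectivity

variable {I : Type u} {S : Type*} {m : unitInterval}

open scoped Classical in
/-- The gauge transformation relating the two charts of `flatAtlas`: on the interior of the `i`-th
edge it jumps from `1` to `a i` after the point `m`. -/
noncomputable def jump (m : unitInterval) (a : I → Equiv.Perm S) : WedgeCircles I → Equiv.Perm S :=
  lift 1 (fun i t ↦ if t ∈ Ioo 0 1 then if t ≤ m then 1 else a i else 1) (by simp) (by simp)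

theorem jump_edge (a : I → Equiv.Perm S) (i : I) {t : unitInterval} (ht : t ∈ Ioo 0 1) :
    jump m a (edge i t) = if t ≤ m then 1 else a i :=
  if_pos ht

variable [TopologicalSpace I] [DiscreteTopology I]

theorem eventually_jump_eq (a : I → Equiv.Perm S) {x : WedgeCircles I}
    (hx : x ≠ wedgeCirclesBase I) (hxm : x ∉ ⋃ i, edge i '' {m}) :
    ∀ᶠ y in 𝓝 x, jump m a y = jump m a x := by
  obtain ⟨i, t, ht, rfl⟩ := (eq_base_or_eq_edge x).resolve_left hx
  have htm : t ≠ m := by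
    rintro rfl
    exact hxm (mem_iUnion_of_mem i (mem_image_of_mem _ rfl))
  rw [nhds_edge i ht, eventually_map]
  filter_upwards [isOpen_Ioo.mem_nhds ht, eventually_ite_le_eq htm 1 (a i)] with s hs hst
  rw [jump_edge a i hs, jump_edge a i ht, hst]

/-- The covering space of the wedge whose holonomy around the `i`-th circle is `a i`. It is
trivialised, once with gauge `1` and once with gauge `jump m a`, over the complement of the points
`edge i m` and over the complement of the vertex. -/
noncomputable def flatAtlas (hm : m ∈ Ioo 0 1) (a : I → Equiv.Perm S) :
    FlatAtlas Bool (WedgeCircles I) S where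
  chart
    | false => (⋃ i, edge i '' {m})ᶜ
    | true => {wedgeCirclesBase I}ᶜ
  isOpen_chart
    | false => (isClosed_iUnion_image_edge isClosed_singleton (by simpa)).isOpen_compl
    | true => isClosed_singleton_base.isOpen_compl
  exists_mem_chart x := by
    by_cases hx : x = wedgeCirclesBase I
    · refine ⟨false, fun h ↦ ?_⟩
      obtain ⟨i, t, rfl, rfl⟩ := mem_iUnion.1 h
      exact edge_eq_base_iff.1 hx hm
    · exact ⟨true, hx⟩
  gauge
    | false => 1
    | true => jump m a
  transition_eventually_const
    | false, false, _, _ => by simp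
    | true, true, _, _ => by simp
    | false, true, _, hx => (eventually_jump_eq a hx.2 hx.1).mono fun _ h ↦ by simp [h]
    | true, false, _, hx => (eventually_jump_eq a hx.1 hx.2).mono fun _ h ↦ by simp [h]

theorem isParallel_loop (hm : m ∈ Ioo 0 1) (a : I → Equiv.Perm S) (i : I) (s : S) :
    (flatAtlas hm a).IsParallel (loop i) (fun t ↦ if t ≤ m then s else a i s) := by
  rintro (_ | _) t ht
  · have htm : t ≠ m := by
      rintro rfl
      exact ht (mem_iUnion_of_mem i (mem_image_of_mem _ rfl))
    exact eventually_ite_le_eq htm _ _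
  · have gauge_inv_apply {t} (ht : t ∈ Ioo 0 1) :
        (jump m a (edge i t))⁻¹ (if t ≤ m then s else a i s) = s := by
      rw [jump_edge a i ht]
      split_ifs <;> simp
    have ht : t ∈ Ioo 0 1 := not_not.1 fun h ↦ ht (edge_eq_base_iff.2 h)
    filter_upwards [isOpen_Ioo.mem_nhds ht] with t' ht'
    exact (gauge_inv_apply ht').trans (gauge_inv_apply ht).symm

theorem exists_hom_perm_apply_loopClass (a : I → Equiv.Perm S) :
    ∃ ψ : FundamentalGroup (WedgeCircles I) (wedgeCirclesBase I) →* Equiv.Perm S,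
      ∀ i, ψ (loopClass i) = a i := by
  obtain ⟨m, hm⟩ : ∃ m : unitInterval, m ∈ Ioo 0 1 := exists_between zero_lt_one
  let : TopologicalSpace S := ⊥
  have : DiscreteTopology S := ⟨rfl⟩
  refine ⟨(flatAtlas hm a).holonomy _, fun i ↦ Equiv.ext fun s ↦ ?_⟩
  have h := (isParallel_loop hm a i s).holonomy_apply
  rwa [if_pos hm.1.le, if_neg hm.2.not_ge] at h

theorem injective_freeGroup_lift_loopClass :
    Function.Injective (FreeGroup.lift (loopClass (I := I))) := by
  obtain ⟨ψ, hψ⟩ := exists_hom_perm_apply_loopClass fun i : I ↦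
    MulAction.toPerm (β := FreeGroup I) (FreeGroup.of i)
  have comp_eq :
      ψ.comp (FreeGroup.lift loopClass) = MulAction.toPermHom (FreeGroup I) (FreeGroup I) :=
    FreeGroup.ext_hom _ _ fun i ↦ by simp [hψ]
  refine .of_comp (f := ψ) ?_
  rw [← MonoidHom.coe_comp, comp_eq]
  exact MulAction.toPerm_injective

end Injectivity

section Surjectivity

variable {I : Type u} [TopologicalSpace I] [DiscreteTopology I]
  {f : C(unitInterval, unitInterval)} (hf₀ : f 0 = 0) (hf₁ : f 1 = 1)

/-- The map of the wedge to itself which reparametrises every edge by `f`. -/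
def reparam : C(WedgeCircles I, WedgeCircles I) where
  toFun := lift (wedgeCirclesBase I) (fun i t ↦ edge i (f t)) (by simp [hf₀, edge_zero])
    (by simp [hf₁, edge_one])
  continuous_toFun := continuous_lift fun i ↦ (continuous_edge i).comp f.continuous

/-- The segment from `s` to `t`, as a path in the unit interval. -/
def segment (s t : unitInterval) : Path s t where
  toFun := Icc.convexComb s t
  continuous_toFun := Icc.continuous_convexComb s t
  source' := Icc.convexComb_zero s t
  target' := Icc.convexComb_one s t

/-- The straight-line homotopy along every edge. -/
def reparamHomotopy : (ContinuousMap.id (WedgeCircles I)).Homotopy (reparam hf₀ hf₁) where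
  toContinuousMap := (ContinuousMap.uncurry ⟨lift (.const _ (wedgeCirclesBase I))
    (fun i ↦ ContinuousMap.curry ⟨fun p ↦ edge i (segment p.1 (f p.1) p.2),
      (continuous_edge i).comp <| Icc.continuous_convexComb_prod.comp <|
        continuous_fst.prodMk <| (f.continuous.comp continuous_fst).prodMk continuous_snd⟩)
    (fun i ↦ ContinuousMap.ext fun s ↦ by simp [segment, hf₀, edge_zero])
    (fun i ↦ ContinuousMap.ext fun s ↦ by simp [segment, hf₁, edge_one]),
    continuous_lift fun i ↦ ContinuousMap.continuous _⟩).comp .prodSwap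
  map_zero_left x := by
    rcases eq_base_or_eq_edge x with rfl | ⟨i, t, -, rfl⟩
    exacts [rfl, congrArg (edge i) (segment t (f t)).source]
  map_one_left x := by
    rcases eq_base_or_eq_edge x with rfl | ⟨i, t, -, rfl⟩
    exacts [rfl, congrArg (edge i) (segment t (f t)).target]

theorem exists_reparam_eventually_eq_base (x : WedgeCircles I) :
    ∃ (f : C(unitInterval, unitInterval)) (hf₀ : f 0 = 0) (hf₁ : f 1 = 1),
      ∀ᶠ y in 𝓝 x, reparam hf₀ hf₁ y = wedgeCirclesBase I := by
  rcases eq_base_or_eq_edge x with rfl | ⟨i, s, hs, rfl⟩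
  · obtain ⟨a, ha₀, ha₁⟩ := exists_between (zero_lt_one (α := unitInterval))
    obtain ⟨b, hab, hb₁⟩ := exists_between ha₁
    obtain ⟨f, hf₀, hf₁⟩ := exists_continuous_eq_zero_eq_one_of_lt hab
    refine ⟨f, hf₀ 0 ha₀.le, hf₁ 1 hb₁.le, ?_⟩
    have base_notMem : wedgeCirclesBase I ∉ ⋃ i, edge i '' Icc a b := fun h ↦ by
      obtain ⟨i, t, ht, h⟩ := mem_iUnion.1 h
      exact edge_eq_base_iff.1 h (Icc_subset_Ioo ha₀ hb₁ ht)
    filter_upwards [(isClosed_iUnion_image_edge isClosed_Icc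
      (Icc_subset_Ioo ha₀ hb₁)).isOpen_compl.mem_nhds base_notMem] with y hy
    rcases eq_base_or_eq_edge y with rfl | ⟨i, t, -, rfl⟩
    · rfl
    rcases lt_or_ge t a with hta | hat
    · exact (congrArg (edge i) (hf₀ t hta.le)).trans (edge_zero i)
    rcases lt_or_ge b t with hbt | htb
    · exact (congrArg (edge i) (hf₁ t hbt.le)).trans (edge_one i)
    exact (hy (mem_iUnion_of_mem i ⟨t, ⟨hat, htb⟩, rfl⟩)).elim
  · obtain ⟨a, hsa, ha₁⟩ := exists_between hs.2
    obtain ⟨f, hf₀, hf₁⟩ := exists_continuous_eq_zero_eq_one_of_lt ha₁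
    refine ⟨f, hf₀ 0 (hs.1.trans hsa).le, hf₁ 1 le_rfl, ?_⟩
    rw [nhds_edge i hs, eventually_map]
    filter_upwards [eventually_lt_nhds hsa] with t hta
    exact (congrArg (edge i) (hf₀ t hta.le)).trans (edge_zero i)

theorem fromPath_map_edge_mem_range (i : I) {t : unitInterval} (σ : Path 0 t)
    (ht : edge i t = wedgeCirclesBase I) :
    .fromPath (.mk ((σ.map (continuous_edge i)).cast (edge_zero i).symm ht.symm)) ∈
      (FreeGroup.lift (loopClass (I := I))).range := by
  have contractible : ContractibleSpace unitInterval :=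
    (convex_Icc (0 : ℝ) 1).contractibleSpace ⟨0, by simp⟩
  have mk_map_cast_eq (τ : Path 0 t) : Path.Homotopic.Quotient.mk
      ((σ.map (continuous_edge i)).cast (edge_zero i).symm ht.symm) =
        .mk ((τ.map (continuous_edge i)).cast (edge_zero i).symm ht.symm) :=
    Path.Homotopic.Quotient.eq.2 <|
      ((SimplyConnectedSpace.paths_homotopic σ τ).map ⟨edge i, continuous_edge i⟩).pathCast _ _
  rcases eq_zero_or_eq_one_of_notMem_Ioo (edge_eq_base_iff.1 ht) with rfl | rfl
  · have map_refl_eq : ((Path.refl 0).map (continuous_edge i)).cast (edge_zero i).symm ht.symm =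
        .refl _ :=
      Path.ext (funext fun _ ↦ edge_zero i)
    rw [mk_map_cast_eq (.refl 0), map_refl_eq]
    exact one_mem _
  · exact mk_map_cast_eq .id ▸ ⟨FreeGroup.of i, FreeGroup.lift_apply_of⟩

theorem exists_trans_contractionTrace_mem_range (y : WedgeCircles I) :
    ∃ c : Path.Homotopic.Quotient (wedgeCirclesBase I) y,
      ∀ (f : C(unitInterval, unitInterval)) (hf₀ : f 0 = 0) (hf₁ : f 1 = 1)
        (hy : reparam hf₀ hf₁ y = wedgeCirclesBase I),
        .fromPath (c.trans (contractionTrace (reparamHomotopy hf₀ hf₁) hy)) ∈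
          (FreeGroup.lift (loopClass (I := I))).range := by
  rcases eq_base_or_eq_edge y with rfl | ⟨i, t, -, rfl⟩
  · refine ⟨.refl _, fun f hf₀ hf₁ hy ↦ ?_⟩
    have trace_eq_refl : contractionTrace (reparamHomotopy hf₀ hf₁) hy = .refl _ := rfl
    rw [trace_eq_refl, Path.Homotopic.Quotient.trans_refl]
    exact one_mem _
  · let σ : Path 0 t := segment 0 t
    refine ⟨.mk ((σ.map (continuous_edge i)).cast (edge_zero i).symm rfl), fun f hf₀ hf₁ hy ↦ ?_⟩
    have trans_trace : (Path.Homotopic.Quotient.mk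
        ((σ.map (continuous_edge i)).cast (edge_zero i).symm rfl)).trans
          (contractionTrace (reparamHomotopy hf₀ hf₁) hy) =
        .mk (((σ.trans (segment t (f t))).map (continuous_edge i)).cast
          (edge_zero i).symm hy.symm) := by
      rw [Path.map_trans]
      rfl
    rw [trans_trace]
    exact fromPath_map_edge_mem_range i _ hy

theorem surjective_freeGroup_lift_loopClass :
    Function.Surjective (FreeGroup.lift (loopClass (I := I))) := by
  choose tree htree using exists_trans_contractionTrace_mem_range (I := I)
  refine MonoidHom.range_eq_top.1 <| subgroup_eq_top_of_local_contractions tree fun x ↦ ?_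
  obtain ⟨f, hf₀, hf₁, hf⟩ := exists_reparam_eventually_eq_base x
  exact ⟨_, reparamHomotopy hf₀ hf₁, hf.mono fun y hy ↦ ⟨hy, htree y f hf₀ hf₁ hy⟩⟩

end Surjectivity

end WedgeCircles

/-- The fundamental group of the wedge of circles indexed by `I` (the realization of
the `Top`-graph with a single vertex and discrete edge space `I`) is isomorphic as a
group to the free group on `I`. -/
theorem fundamentalGroup_wedgeCircles (I : Type u) [TopologicalSpace I]
    [DiscreteTopology I] :
    Nonempty (FundamentalGroup (WedgeCircles I) (wedgeCirclesBase I) ≃* FreeGroup I) :=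
  ⟨(MulEquiv.ofBijective (FreeGroup.lift WedgeCircles.loopClass)
    ⟨WedgeCircles.injective_freeGroup_lift_loopClass,
      WedgeCircles.surjective_freeGroup_lift_loopClass⟩).symm⟩
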